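/- Let g ≥ 4 and let S = {0} ∪ {n ∈ ℕ | n even and 4 ≤ n ≤ 2g−2} ∪ {2g−3} ∪ {n ∈ ℕ | n ≥ 2g}. Then S is a numerical semigroup of genus g, S is symmetric (with conductor c = 2g), and W_{K(S)} = W_S = (g² − 5g + 10)/2. -/

import Mathlib

/-- A numerical semigroup: `0 ∈ S`, closed under addition, finite complement. -/
def IsNumericalSemigroup (S : Set ℕ) : Prop :=
  0 ∈ S ∧ (∀ a ∈ S, ∀ b ∈ S, a + b ∈ S) ∧ (Sᶜ : Set ℕ).Finite

/-- The genus: number of gaps. -/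
noncomputable def sgGenus (T : Set ℕ) : ℕ := (Tᶜ : Set ℕ).ncard

/-- The weight `W_T = Σ gaps − binomial(g+1,2)`, as an integer. -/
noncomputable def sgWeight (T : Set ℕ) : ℤ :=
  (∑ᶠ x ∈ (Tᶜ : Set ℕ), (x : ℤ)) - ((sgGenus T + 1).choose 2 : ℤ)

/-- The conductor: least `c` with `n ∈ S` for all `n ≥ c`. -/
noncomputable def sgConductor (S : Set ℕ) : ℕ :=
  sInf {c : ℕ | ∀ n : ℕ, c ≤ n → n ∈ S}

/-- `K(S) = {a ∈ ℕ | c − 1 − a ∉ S}`, the difference computed in `ℤ`,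
no negative integer belonging to `S`. -/
def Kset (S : Set ℕ) : Set ℕ :=
  {a : ℕ | ¬ ∃ s ∈ S, (s : ℤ) = (sgConductor S : ℤ) - 1 - (a : ℤ)}

/-- `S` is symmetric if for all `0 ≤ a ≤ c−1`, `a ∈ S ↔ c−1−a ∉ S`. -/
def IsSymmetricSgp (S : Set ℕ) : Prop :=
  ∀ a : ℕ, a < sgConductor S → (a ∈ S ↔ (sgConductor S - 1 - a) ∉ S)

/-!
Apart from `2`, the gaps of `S` are the odd numbers below `2g` with `2g - 3` left out. They are thus
`1, 3, …, 2g - 1` with `2g - 3` replaced by `2`: there are `g` of them, with sum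
`g² - (2g - 3) + 2`, and subtracting `g(g + 1)/2` gives the weight. The reflection
`a ↦ 2g - 1 - a` changes parity and exchanges `2` with `2g - 3`, so `S` is symmetric; for a
symmetric semigroup `K(S) = S`, and the two weights agree.
-/

theorem sgGenus_of_compl_eq {T : Set ℕ} {F : Finset ℕ} (h : Tᶜ = F) : sgGenus T = F.card := by
  rw [sgGenus, h, Set.ncard_coe_finset]

theorem sgWeight_of_compl_eq {T : Set ℕ} {F : Finset ℕ} (h : Tᶜ = F) :
    sgWeight T = ∑ x ∈ F, (x : ℤ) - ((F.card + 1).choose 2 : ℤ) := by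
  rw [sgWeight, sgGenus_of_compl_eq h, h, finsum_mem_coe_finset]

theorem sgConductor_eq_succ {S : Set ℕ} {m : ℕ} (hm : m ∉ S) (h : ∀ n, m < n → n ∈ S) :
    sgConductor S = m + 1 := by
  refine IsLeast.csInf_eq ⟨h, fun c hc => ?_⟩
  by_contra! hlt
  exact hm (hc m (Nat.le_of_lt_succ hlt))

theorem mem_of_sgConductor_le {S : Set ℕ} (hS : Sᶜ.Finite) {n : ℕ} (hn : sgConductor S ≤ n) :
    n ∈ S := by
  obtain ⟨b, hb⟩ := hS.bddAbove
  have hb' : ∀ k, b + 1 ≤ k → k ∈ S := fun k hk => by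
    by_contra hkS
    exact absurd (hb hkS) (Nat.not_le_of_lt hk)
  exact Nat.sInf_mem (s := {c | ∀ k, c ≤ k → k ∈ S}) ⟨b + 1, hb'⟩ n hn

theorem mem_kset_of_lt {S : Set ℕ} {a : ℕ} (ha : a < sgConductor S) :
    a ∈ Kset S ↔ sgConductor S - 1 - a ∉ S := by
  refine not_congr ⟨?_, fun h => ⟨_, h, by omega⟩⟩
  rintro ⟨s, hs, hsa⟩
  rwa [show sgConductor S - 1 - a = s by omega]

theorem mem_kset_of_le {S : Set ℕ} {a : ℕ} (ha : sgConductor S ≤ a) : a ∈ Kset S := by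
  rintro ⟨s, -, hsa⟩
  omega

theorem IsSymmetricSgp.kset_eq_self {S : Set ℕ} (h : IsSymmetricSgp S) (hS : Sᶜ.Finite) :
    Kset S = S := by
  ext a
  rcases lt_or_ge a (sgConductor S) with ha | ha
  · rw [mem_kset_of_lt ha, h a ha]
  · exact iff_of_true (mem_kset_of_le ha) (mem_of_sgConductor_le hS ha)

theorem sum_range_two_mul_add_one {R : Type*} [CommSemiring R] (n : ℕ) :
    ∑ i ∈ Finset.range n, (2 * (i : R) + 1) = (n : R) ^ 2 := by
  induction n with
  | zero => simp
  | succ k ih =>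
    rw [Finset.sum_range_succ, ih]
    push_cast
    ring

/-- The symmetric semigroup `{0} ∪ {4, 6, …, 2g - 2} ∪ {2g - 3} ∪ [2g, ∞)` of genus `g`, meaningful
for `3 ≤ g`: at `g = 2` it is not closed under addition, and for `g ≤ 1` the subtractions
truncate. -/
def biellipticSemigroup (g : ℕ) : Set ℕ :=
  {0} ∪ {n : ℕ | Even n ∧ 4 ≤ n ∧ n ≤ 2 * g - 2} ∪ {2 * g - 3} ∪ {n : ℕ | 2 * g ≤ n}

/-- The gaps of `biellipticSemigroup g` for `2 ≤ g`, obtained from the first `g` odd numbers by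
replacing `2g - 3` with `2`. -/
def biellipticGaps (g : ℕ) : Finset ℕ :=
  insert 2 (((Finset.range g).image fun i => 2 * i + 1).erase (2 * g - 3))

section BiellipticGaps

variable {g : ℕ}

theorem mem_biellipticGaps {n : ℕ} :
    n ∈ biellipticGaps g ↔ n = 2 ∨ n ≠ 2 * g - 3 ∧ n % 2 = 1 ∧ n < 2 * g := by
  have mem_odds : (∃ i < g, 2 * i + 1 = n) ↔ n % 2 = 1 ∧ n < 2 * g :=
    ⟨by rintro ⟨i, hi, rfl⟩; omega, fun h => ⟨n / 2, by omega, by omega⟩⟩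
  simp only [biellipticGaps, Finset.mem_insert, Finset.mem_erase, Finset.mem_image,
    Finset.mem_range, mem_odds]

theorem sum_biellipticGaps_add {M : Type*} [AddCommMonoid M] (hg : 2 ≤ g) (f : ℕ → M) :
    ∑ x ∈ biellipticGaps g, f x + f (2 * g - 3) = f 2 + ∑ i ∈ Finset.range g, f (2 * i + 1) := by
  have two_notMem : 2 ∉ ((Finset.range g).image fun i => 2 * i + 1).erase (2 * g - 3) := by
    simp only [Finset.mem_erase, Finset.mem_image, not_and, not_exists]
    omega
  have mem_odds : 2 * g - 3 ∈ (Finset.range g).image fun i => 2 * i + 1 :=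
    Finset.mem_image.2 ⟨g - 2, Finset.mem_range.2 (by omega), by omega⟩
  rw [biellipticGaps, Finset.sum_insert two_notMem, add_assoc, Finset.sum_erase_add _ _ mem_odds,
    Finset.sum_image fun i _ j _ hij => by omega]

theorem card_biellipticGaps (hg : 2 ≤ g) : (biellipticGaps g).card = g := by
  have h := sum_biellipticGaps_add hg fun _ => 1
  simp only [Finset.sum_const, Finset.card_range, smul_eq_mul, mul_one] at h
  omega

theorem sum_cast_biellipticGaps (hg : 2 ≤ g) :
    ∑ x ∈ biellipticGaps g, (x : ℤ) = (g : ℤ) ^ 2 - 2 * g + 5 := by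
  have h := sum_biellipticGaps_add hg fun x => (x : ℤ)
  have cast_gap : ((2 * g - 3 : ℕ) : ℤ) = 2 * g - 3 := by omega
  push_cast [cast_gap, sum_range_two_mul_add_one] at h
  linear_combination h

end BiellipticGaps

section BiellipticSemigroup

variable {g : ℕ}

theorem mem_biellipticSemigroup {n : ℕ} :
    n ∈ biellipticSemigroup g ↔ n % 2 = 0 ∧ n ≠ 2 ∨ n = 2 * g - 3 ∨ 2 * g ≤ n := by
  simp only [biellipticSemigroup, Set.mem_union, Set.mem_singleton_iff, Set.mem_ofPred_eq,
    Nat.even_iff]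
  omega

theorem compl_biellipticSemigroup (hg : 2 ≤ g) :
    (biellipticSemigroup g)ᶜ = (biellipticGaps g : Set ℕ) := by
  ext n
  rw [Set.mem_compl_iff, mem_biellipticSemigroup, Finset.mem_coe, mem_biellipticGaps]
  omega

theorem isNumericalSemigroup_biellipticSemigroup (hg : 3 ≤ g) :
    IsNumericalSemigroup (biellipticSemigroup g) := by
  refine ⟨mem_biellipticSemigroup.2 (by omega), fun a ha b hb => ?_, ?_⟩
  · rw [mem_biellipticSemigroup] at ha hb ⊢
    omega
  · rw [compl_biellipticSemigroup (by omega)]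
    exact Finset.finite_toSet _

theorem sgGenus_biellipticSemigroup (hg : 2 ≤ g) : sgGenus (biellipticSemigroup g) = g := by
  rw [sgGenus_of_compl_eq (compl_biellipticSemigroup hg), card_biellipticGaps hg]

theorem sgConductor_biellipticSemigroup (hg : 1 ≤ g) :
    sgConductor (biellipticSemigroup g) = 2 * g := by
  have frobenius_notMem : 2 * g - 1 ∉ biellipticSemigroup g := by
    rw [mem_biellipticSemigroup]
    omega
  rw [sgConductor_eq_succ frobenius_notMem fun n hn => mem_biellipticSemigroup.2 (by omega)]
  omega

theorem isSymmetricSgp_biellipticSemigroup (hg : 1 ≤ g) :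
    IsSymmetricSgp (biellipticSemigroup g) := by
  intro a ha
  rw [sgConductor_biellipticSemigroup hg] at ha ⊢
  rw [mem_biellipticSemigroup, mem_biellipticSemigroup]
  omega

theorem two_mul_sgWeight_biellipticSemigroup (hg : 2 ≤ g) :
    2 * sgWeight (biellipticSemigroup g) = (g : ℤ) ^ 2 - 5 * g + 10 := by
  have choose_two : ((g : ℤ) + 1) * g = ((g + 1).choose 2 : ℤ) * 2 := by
    have h := Nat.add_one_mul_choose_eq g 1
    rw [Nat.choose_one_right] at h
    exact_mod_cast h
  rw [sgWeight_of_compl_eq (compl_biellipticSemigroup hg), card_biellipticGaps hg,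
    sum_cast_biellipticGaps hg]
  linear_combination choose_two

end BiellipticSemigroup

/-- for `g ≥ 4`, the set
`S = {0} ∪ {even n | 4 ≤ n ≤ 2g−2} ∪ {2g−3} ∪ {n | n ≥ 2g}` is a symmetric
numerical semigroup of genus `g` with conductor `2g`, and
`W_{K(S)} = W_S = (g²−5g+10)/2`. -/
theorem symmetric_bielliptic_example (g : ℕ) (hg : 4 ≤ g) (S : Set ℕ)
    (hSdef : S = {0} ∪ {n : ℕ | Even n ∧ 4 ≤ n ∧ n ≤ 2 * g - 2} ∪ {2 * g - 3}
      ∪ {n : ℕ | 2 * g ≤ n}) :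
    IsNumericalSemigroup S ∧ sgGenus S = g ∧ IsSymmetricSgp S ∧
      sgConductor S = 2 * g ∧ sgWeight (Kset S) = sgWeight S ∧
      sgWeight S = ((g : ℤ) ^ 2 - 5 * (g : ℤ) + 10) / 2 := by
  obtain rfl : S = biellipticSemigroup g := hSdef
  have hS := isNumericalSemigroup_biellipticSemigroup (g := g) (by omega)
  have hsymm := isSymmetricSgp_biellipticSemigroup (g := g) (by omega)
  have hweight := two_mul_sgWeight_biellipticSemigroup (g := g) (by omega)
  exact ⟨hS, sgGenus_biellipticSemigroup (by omega), hsymm,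
    sgConductor_biellipticSemigroup (by omega), by rw [hsymm.kset_eq_self hS.2.2],
    Int.eq_ediv_of_mul_eq_right two_ne_zero hweight⟩
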